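/- arXiv:1804.05216 — 3 statements merged into one kernel-verified Lean document; each statement's English description precedes it below -/
import Mathlib

section
/- Let G be a group with a finite symmetric generating set S such that the Cayley graph Γ(G,S) is k-almost convex for every k ∈ ℕ. Then G is finitely presented: there is a finite set X and a surjective group homomorphism from the free group on X onto G whose kernel is the normal closure of a finite subset. -/
/-- The Cayley graph of a group `G` with respect to a (symmetric) generating set `S`:
`x` is adjacent to `y` iff `x ≠ y` and `x⁻¹ * y ∈ S` (for symmetric `S`). -/
def cayleyGraph (G : Type*) [Group G] (S : Set G) : SimpleGraph G :=
  SimpleGraph.fromRel (fun x y => x⁻¹ * y ∈ S)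

/-- A graph `Γ` with basepoint `o` is *k-almost convex* if there is `N` such that any two
vertices on the sphere of radius `n` about `o` at distance at most `k` from each other can
be joined by a path of length at most `N` staying in the ball of radius `n`. -/
def KAlmostConvex {V : Type*} (Γ : SimpleGraph V) (o : V) (k : ℕ) : Prop :=
  ∃ N : ℕ, ∀ (n : ℕ) (x y : V), Γ.dist o x = n → Γ.dist o y = n → Γ.dist x y ≤ k →
    ∃ w : Γ.Walk x y, w.length ≤ N ∧ ∀ v ∈ w.support, Γ.dist o v ≤ n

/-- A group is *finitely presented* if it is the quotient of a free group on a finite set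
by the normal closure of a finite set of relators. -/
def IsFinitelyPresented (G : Type*) [Group G] : Prop :=
  ∃ (X : Type) (_ : Finite X) (φ : FreeGroup X →* G),
    Function.Surjective φ ∧
    ∃ R : Set (FreeGroup X), R.Finite ∧ φ.ker = Subgroup.normalClosure R

/-!
Label each edge of the Cayley graph by the class of its generator in the group presented by all
relators of length at most `L`. The labels multiply to `1` around every closed walk of length at
most `L`. Almost convexity propagates this to all closed walks: pull a closed walk in the ball of
radius `n + 1` radially into the ball of radius `n`. The images of adjacent vertices are either
adjacent, or are points of the sphere of radius `n` at distance at most `3`, so they are joined by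
a short walk in the smaller ball, and the quadrilateral between an edge and its image is a closed
walk of length at most `L`. After finitely many steps the walk is constant. Hence every relator is
a consequence of those of length at most `L`.
-/

section Holonomy

variable {V H K : Type*} [Group H] [Group K] {Γ : SimpleGraph V} {c : V → V → H} {x y z : V}

/-- The holonomy of an edge labelling `c` along a walk: the product, in order, of the labels
`c u v` of its directed edges. Only the values of `c` on adjacent pairs matter. -/
def holonomy (c : V → V → H) (w : Γ.Walk x y) : H :=
  (w.darts.map fun d => c d.fst d.snd).prod

@[simp]
theorem holonomy_nil : holonomy c (.nil : Γ.Walk x x) = 1 := rfl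

@[simp]
theorem holonomy_cons (h : Γ.Adj x y) (w : Γ.Walk y z) :
    holonomy c (.cons h w) = c x y * holonomy c w := by
  simp [holonomy]

@[simp]
theorem holonomy_append (w : Γ.Walk x y) (w' : Γ.Walk y z) :
    holonomy c (w.append w') = holonomy c w * holonomy c w' := by
  simp [holonomy]

theorem map_holonomy (ψ : H →* K) (w : Γ.Walk x y) :
    ψ (holonomy c w) = holonomy (fun u v => ψ (c u v)) w := by
  simp [holonomy, map_list_prod, Function.comp_def]

theorem mul_holonomy {σ : V → H} (hσ : ∀ u v, Γ.Adj u v → σ u * c u v = σ v)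
    (w : Γ.Walk x y) : σ x * holonomy c w = σ y := by
  induction w with
  | nil => simp
  | cons h w ih => rw [holonomy_cons, ← mul_assoc, hσ _ _ h, ih]

theorem holonomy_eq_of_length_add_le {L : ℕ}
    (hc : ∀ v (w : Γ.Walk v v), w.length ≤ L → holonomy c w = 1)
    (w w' : Γ.Walk x y) (hL : w.length + w'.length ≤ L) : holonomy c w = holonomy c w' := by
  wlog hle : w'.length ≤ w.length generalizing w w'
  · exact (this w' w (by omega) (by omega)).symm
  have hw : holonomy c w * holonomy c w'.reverse = 1 := by
    rw [← holonomy_append]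
    exact hc _ _ (by simpa using hL)
  have hw' : holonomy c w' * holonomy c w'.reverse = 1 := by
    rw [← holonomy_append]
    refine hc _ _ ?_
    rw [SimpleGraph.Walk.length_append, SimpleGraph.Walk.length_reverse]
    omega
  exact mul_right_cancel (hw.trans hw'.symm)

theorem exists_potential (hΓ : Γ.Connected)
    (hc : ∀ v (w : Γ.Walk v v), holonomy c w = 1) :
    ∃ σ : V → H, ∀ u v, Γ.Adj u v → σ u * c u v = σ v := by
  obtain ⟨o⟩ := hΓ.nonempty
  let γ (v : V) : Γ.Walk o v := (hΓ.preconnected o v).some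
  refine ⟨fun v => holonomy c (γ v), fun u v huv => ?_⟩
  have h := holonomy_eq_of_length_add_le (fun v w _ => hc v w)
    ((γ u).append (.cons huv .nil)) (γ v) le_rfl
  simpa using h

theorem exists_walk_holonomy_mul_eq {A B : Set V} {M : ℕ} {r : V → V}
    (hc : ∀ v (w : Γ.Walk v v), w.length ≤ M + 3 → holonomy c w = 1)
    (hr : Set.MapsTo r A B) (a : ∀ v, Γ.Walk (r v) v) (ha : ∀ v ∈ A, (a v).length ≤ 1)
    (hadj : ∀ u ∈ A, ∀ v ∈ A, Γ.Adj u v →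
      ∃ w : Γ.Walk (r u) (r v), w.length ≤ M ∧ ∀ z ∈ w.support, z ∈ B)
    (w : Γ.Walk x y) (hw : ∀ z ∈ w.support, z ∈ A) :
    ∃ w' : Γ.Walk (r x) (r y), (∀ z ∈ w'.support, z ∈ B) ∧
      holonomy c (a x) * holonomy c w = holonomy c w' * holonomy c (a y) := by
  induction w with
  | nil => exact ⟨.nil, by simpa using hr (hw _ (by simp)), by simp⟩
  | @cons x u y hxu w ih =>
    have hx : x ∈ A := hw x (by simp)
    have hu : u ∈ A := hw u (by simp)
    obtain ⟨p, hpM, hpB⟩ := hadj x hx u hu hxu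
    obtain ⟨q, hqB, hq⟩ := ih fun z hz => hw z (by simp [hz])
    have hquad : holonomy c (a x) * c x u = holonomy c p * holonomy c (a u) := by
      have h := holonomy_eq_of_length_add_le hc
        ((a x).append (.cons hxu .nil)) (p.append (a u)) (by
          have := ha x hx
          have := ha u hu
          simp only [SimpleGraph.Walk.length_append, SimpleGraph.Walk.length_cons,
            SimpleGraph.Walk.length_nil]
          omega)
      simpa using h
    refine ⟨p.append q, fun z hz => ?_, ?_⟩
    · exact (SimpleGraph.Walk.mem_support_append_iff _ _).1 hz |>.elim (hpB z) (hqB z)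
    · rw [holonomy_cons, ← mul_assoc, hquad, mul_assoc, hq, holonomy_append, mul_assoc]

end Holonomy

section AlmostConvex

variable {V : Type*} {Γ : SimpleGraph V} {o : V}

theorem exists_dist_eq_min (hΓ : Γ.Connected) (o : V) (n : ℕ) (v : V) :
    ∃ u, Γ.dist o u = min n (Γ.dist o v) ∧ Γ.dist u v = Γ.dist o v - n := by
  obtain ⟨w, hw⟩ := hΓ.exists_walk_length_eq_dist o v
  have htake := SimpleGraph.dist_le (w.take n)
  have hdrop := SimpleGraph.dist_le (w.drop n)
  have htri := hΓ.dist_triangle (u := o) (v := w.getVert n) (w := v)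
  rw [SimpleGraph.Walk.take_length] at htake
  rw [SimpleGraph.Walk.drop_length] at hdrop
  exact ⟨w.getVert n, by omega, by omega⟩

theorem exists_radial_retraction {n N : ℕ} (hΓ : Γ.Connected)
    (hN : ∀ x y, Γ.dist o x = n → Γ.dist o y = n → Γ.dist x y ≤ 3 →
      ∃ w : Γ.Walk x y, w.length ≤ N ∧ ∀ v ∈ w.support, Γ.dist o v ≤ n) :
    ∃ r : V → V, (∀ v, Γ.dist o (r v) ≤ n) ∧ (∀ v, Γ.dist (r v) v = Γ.dist o v - n) ∧
      ∀ u v, Γ.dist o u ≤ n + 1 → Γ.dist o v ≤ n + 1 → Γ.Adj u v →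
        ∃ w : Γ.Walk (r u) (r v), w.length ≤ max N 1 ∧ ∀ z ∈ w.support, Γ.dist o z ≤ n := by
  choose r hro hrv using exists_dist_eq_min hΓ o n
  refine ⟨r, fun v => by rw [hro]; exact min_le_left _ _, hrv, fun u v hu hv huv => ?_⟩
  have hrv_eq (v : V) (hv : Γ.dist o v ≤ n) : r v = v :=
    hΓ.dist_eq_zero_iff.1 (by rw [hrv]; omega)
  have huv_dist : Γ.dist u v = 1 := SimpleGraph.dist_eq_one_iff_adj.2 huv
  by_cases hball : Γ.dist o u ≤ n ∧ Γ.dist o v ≤ n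
  · rw [hrv_eq u hball.1, hrv_eq v hball.2]
    exact ⟨.cons huv .nil, by simp, by simpa using hball⟩
  · have hou := hΓ.dist_triangle (u := o) (v := v) (w := u)
    have hov := hΓ.dist_triangle (u := o) (v := u) (w := v)
    rw [SimpleGraph.dist_comm (u := v)] at hou
    have hru := hΓ.dist_triangle (u := r u) (v := u) (w := r v)
    have huv' := hΓ.dist_triangle (u := u) (v := v) (w := r v)
    rw [SimpleGraph.dist_comm (u := v), hrv] at huv'
    rw [hrv] at hru
    obtain ⟨w, hwN, hwn⟩ := hN (r u) (r v) (by rw [hro]; omega) (by rw [hro]; omega) (by omega)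
    exact ⟨w, hwN.trans (le_max_left _ _), hwn⟩

theorem KAlmostConvex.exists_forall_holonomy_eq_one.{u} (hac : KAlmostConvex Γ o 3)
    (hΓ : Γ.Connected) :
    ∃ L : ℕ, ∀ {H : Type u} [Group H] (c : V → V → H),
      (∀ v (w : Γ.Walk v v), w.length ≤ L → holonomy c w = 1) →
        ∀ v (w : Γ.Walk v v), holonomy c w = 1 := by
  obtain ⟨N, hN⟩ := hac
  refine ⟨max N 1 + 3, fun {H} _ c hc => ?_⟩
  have hball (n : ℕ) : ∀ v (w : Γ.Walk v v), (∀ z ∈ w.support, Γ.dist o z ≤ n) →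
      holonomy c w = 1 := by
    induction n with
    | zero =>
      intro v w hw
      have heq (z : V) (hz : z ∈ w.support) : o = z :=
        hΓ.dist_eq_zero_iff.1 (Nat.le_zero.1 (hw z hz))
      cases w with
      | nil => rfl
      | cons h w => exact absurd ((heq _ (by simp)).symm.trans (heq _ (by simp))) h.ne
    | succ n ih =>
      intro v w hw
      obtain ⟨r, hrn, hrv, hadj⟩ := exists_radial_retraction hΓ (hN n)
      choose a ha using fun v => hΓ.exists_walk_length_eq_dist (r v) v
      obtain ⟨w', hw'n, hw'⟩ := exists_walk_holonomy_mul_eq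
        (A := {z | Γ.dist o z ≤ n + 1}) (B := {z | Γ.dist o z ≤ n}) hc (fun z _ => hrn z) a
        (fun z hz => by rw [ha, hrv]; exact Nat.sub_le_iff_le_add'.2 hz)
        (fun x hx y hy => hadj x y hx hy) w hw
      rw [ih _ w' hw'n, one_mul] at hw'
      exact mul_eq_left.1 hw'
  intro v w
  obtain ⟨n, hn⟩ := (w.support.finite_toSet.image (Γ.dist o)).bddAbove
  exact hball n v w fun z hz => hn ⟨z, hz, rfl⟩

end AlmostConvex

section CayleyGraph

variable {G : Type*} [Group G] {S : Set G}

theorem cayleyGraph_reachable_mul (g : G) {s : G} (hs : s ∈ S) :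
    (cayleyGraph G S).Reachable g (g * s) := by
  by_cases h : g = g * s
  · rw [← h]
  · exact SimpleGraph.Adj.reachable ⟨h, .inl (by simpa using hs)⟩

theorem cayleyGraph_connected (hS : Subgroup.closure S = ⊤) : (cayleyGraph G S).Connected := by
  refine (SimpleGraph.connected_iff_exists_forall_reachable _).2 ⟨1, fun g => ?_⟩
  have hg : g ∈ Subgroup.closure S := hS ▸ Subgroup.mem_top g
  induction hg using Subgroup.closure_induction_right with
  | one => rfl
  | mul_right x _ s hs ih => exact ih.trans (cayleyGraph_reachable_mul x hs)
  | mul_inv_cancel x _ s hs ih =>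
    exact ih.trans (by simpa using (cayleyGraph_reachable_mul (x * s⁻¹) hs).symm)

end CayleyGraph

section Relators

variable {X G H : Type*} [Group G] [Group H]

theorem ker_le_ker_of_mul_map_of {φ : FreeGroup X →* G} {ψ : FreeGroup X →* H} {σ : G → H}
    (hσ : ∀ g x, σ g * ψ (.of x) = σ (g * φ (.of x))) : φ.ker ≤ ψ.ker := by
  have hmul (u : FreeGroup X) : ∀ g, σ g * ψ u = σ (g * φ u) := by
    induction u using FreeGroup.induction_on with
    | C1 => simp
    | of x => exact (hσ · x)
    | inv_of x _ =>
      intro g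
      rw [map_inv, map_inv, mul_inv_eq_iff_eq_mul, hσ, inv_mul_cancel_right]
    | mul u v hu hv =>
      intro g
      rw [map_mul, map_mul, ← mul_assoc, hu, hv, mul_assoc]
  intro u hu
  have h := hmul u 1
  rw [hu, mul_one] at h
  exact mul_eq_left.1 h

variable [DecidableEq X]

theorem norm_holonomy_le {V : Type*} {Γ : SimpleGraph V} {c : V → V → FreeGroup X}
    (hc : ∀ u v, Γ.Adj u v → (c u v).norm ≤ 1) {x y : V} (w : Γ.Walk x y) :
    (holonomy c w).norm ≤ w.length := by
  induction w with
  | nil => simp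
  | @cons x u y h w ih =>
    calc (holonomy c (.cons h w)).norm
      _ ≤ (c x u).norm + (holonomy c w).norm := by
        rw [holonomy_cons]; exact FreeGroup.norm_mul_le _ _
      _ ≤ 1 + w.length := add_le_add (hc x u h) ih
      _ = (SimpleGraph.Walk.cons h w).length := by rw [SimpleGraph.Walk.length_cons, add_comm]

theorem exists_norm_le_one_of_cayleyGraph_adj {f : X → G} {g h : G}
    (hgh : (cayleyGraph G (Set.range f)).Adj g h) :
    ∃ u : FreeGroup X, u.norm ≤ 1 ∧ FreeGroup.lift f u = g⁻¹ * h := by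
  obtain ⟨-, ⟨x, hx⟩ | ⟨x, hx⟩⟩ := hgh
  · exact ⟨.of x, by simp, by simpa using hx⟩
  · exact ⟨(.of x)⁻¹, by simp, by simp [hx]⟩

/-- The relators of length at most `L` of the homomorphism `φ`, viewed as a marking of `G` by the
generators `X`; they are the candidate for a finite set of defining relators. Length is that of
the reduced word. -/
def shortRelators (φ : FreeGroup X →* G) (L : ℕ) : Set (FreeGroup X) :=
  {u | φ u = 1 ∧ u.norm ≤ L}

theorem finite_shortRelators [Finite X] (φ : FreeGroup X →* G) (L : ℕ) :
    (shortRelators φ L).Finite :=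
  ((List.finite_length_le (X × Bool) L).image FreeGroup.mk).subset
    fun u hu => ⟨u.toWord, hu.2, FreeGroup.mk_toWord⟩

theorem holonomy_mem_shortRelators {φ : FreeGroup X →* G} {Γ : SimpleGraph G}
    {e : G → G → FreeGroup X} (he_norm : ∀ g h, Γ.Adj g h → (e g h).norm ≤ 1)
    (hφe : ∀ g h, Γ.Adj g h → φ (e g h) = g⁻¹ * h) {g : G} (w : Γ.Walk g g) :
    holonomy e w ∈ shortRelators φ w.length := by
  refine ⟨?_, norm_holonomy_le he_norm w⟩
  have h := mul_holonomy (σ := id) (c := fun g h => φ (e g h))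
    (fun g h hgh => by simp [hφe g h hgh]) w
  rwa [← map_holonomy, id, mul_eq_left] at h

theorem KAlmostConvex.exists_ker_lift_eq_normalClosure {f : X → G}
    (hac : KAlmostConvex (cayleyGraph G (Set.range f)) 1 3)
    (hgen : Subgroup.closure (Set.range f) = ⊤) :
    ∃ L, (FreeGroup.lift f).ker = Subgroup.normalClosure (shortRelators (FreeGroup.lift f) L) := by
  have hΓ := cayleyGraph_connected hgen
  obtain ⟨L, hL⟩ := hac.exists_forall_holonomy_eq_one hΓ
  choose! e he_norm hφe using
    fun g h => exists_norm_le_one_of_cayleyGraph_adj (f := f) (g := g) (h := h)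
  refine ⟨max L 2, le_antisymm ?_ (Subgroup.normalClosure_le_normal fun u hu => hu.1)⟩
  let π := QuotientGroup.mk' (Subgroup.normalClosure (shortRelators (FreeGroup.lift f) (max L 2)))
  have hπ (u : FreeGroup X) (hu : FreeGroup.lift f u = 1) (hu' : u.norm ≤ max L 2) : π u = 1 :=
    (QuotientGroup.eq_one_iff u).2 (Subgroup.subset_normalClosure ⟨hu, hu'⟩)
  obtain ⟨σ, hσ⟩ := exists_potential hΓ <| hL (fun g h => π (e g h)) fun g w hw => by
    obtain ⟨hw_one, hw_norm⟩ := holonomy_mem_shortRelators he_norm hφe w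
    rw [← map_holonomy]
    exact hπ _ hw_one ((hw_norm.trans hw).trans (le_max_left _ _))
  suffices h : (FreeGroup.lift f).ker ≤ π.ker by rwa [QuotientGroup.ker_mk'] at h
  refine ker_le_ker_of_mul_map_of (σ := σ) fun g x => ?_
  rw [FreeGroup.lift_apply_of]
  by_cases hx : f x = 1
  · rw [hx, hπ (.of x) (by simpa using hx) (by simp), mul_one, mul_one]
  have hadj : (cayleyGraph G (Set.range f)).Adj g (g * f x) :=
    ⟨by simpa using hx, .inl ⟨x, by simp⟩⟩
  have hπe : π (e g (g * f x)) = π (.of x) := by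
    rw [← inv_mul_eq_one, ← map_inv, ← map_mul]
    refine hπ _ (by simp [hφe _ _ hadj]) (le_max_of_le_right ?_)
    calc ((e g (g * f x))⁻¹ * .of x).norm
      _ ≤ (e g (g * f x))⁻¹.norm + (FreeGroup.of x).norm := FreeGroup.norm_mul_le _ _
      _ ≤ 1 + 1 := add_le_add (by simpa using he_norm _ _ hadj) (by simp)
  rw [← hπe]
  exact hσ _ _ hadj

end Relators

theorem almostConvex_finitelyPresented_general {G : Type*} [Group G] (S : Set G)
    (hS_fin : S.Finite) (hS_gen : Subgroup.closure S = ⊤)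
    (hac : KAlmostConvex (cayleyGraph G S) 1 3) : IsFinitelyPresented G := by
  obtain ⟨n, f, -, rfl⟩ := hS_fin.fin_param
  obtain ⟨L, hL⟩ := hac.exists_ker_lift_eq_normalClosure hS_gen
  refine ⟨Fin n, inferInstance, FreeGroup.lift f, ?_, _, finite_shortRelators _ L, hL⟩
  rw [← MonoidHom.range_eq_top, FreeGroup.range_lift_eq_closure, hS_gen]

/-- **Cannon.** A group whose Cayley graph (with respect to a finite symmetric generating
set) is `k`-almost convex for every `k` is finitely presented. -/
theorem almostConvex_finitelyPresented
    (G : Type) [Group G] (S : Set G)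
    (hS_fin : S.Finite) (hS_symm : ∀ s ∈ S, s⁻¹ ∈ S) (hS_one : (1 : G) ∉ S)
    (hS_gen : Subgroup.closure S = ⊤)
    (hac : ∀ k : ℕ, KAlmostConvex (cayleyGraph G S) 1 k) :
    IsFinitelyPresented G :=
  almostConvex_finitelyPresented_general S hS_fin hS_gen (hac 3)
end

section
/- For every n ≥ 1, the free abelian group ℤⁿ with the standard symmetric generating set S = {±e₁, …, ±eₙ} (the standard basis vectors and their inverses) has Cayley graph Γ(ℤⁿ, S) that is k-almost convex for every k ∈ ℕ. -/
/-- The Cayley graph of an additive group `G` with respect to a (symmetric) generating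
set `S`: `x` is adjacent to `y` iff `x ≠ y` and `-x + y ∈ S` (for symmetric `S`). -/
def cayleyGraphAdd (G : Type*) [AddGroup G] (S : Set G) : SimpleGraph G :=
  SimpleGraph.fromRel (fun x y => -x + y ∈ S)

/-!
The word metric of `ℤ^ι` with respect to the standard generators is the `ℓ¹` metric. Fix a centre
`c`, let `x ≠ y`, and pick a coordinate `i` with `x i ≠ y i`. By symmetry assume that `x i` is at
least as far from `c i` as `y i` is. Moving `x i` by one unit towards `y i` then does not take it
further from `c i`, so this step decreases the distance to `y` and stays in every ball about `c`
that contains `x`. Iterating, any two points of a ball are joined by a geodesic inside the ball.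
-/

section Graph

variable {V : Type*} {Γ : SimpleGraph V}

/-- A set of vertices is weakly convex if any two of its points are joined by at least one geodesic
of `Γ` (a walk of length `Γ.dist x y`) that stays in the set. For balls about a base point this
is a strong form of almost convexity. -/
def IsWeaklyConvex (Γ : SimpleGraph V) (s : Set V) : Prop :=
  ∀ x ∈ s, ∀ y ∈ s, ∃ w : Γ.Walk x y, w.length = Γ.dist x y ∧ ∀ v ∈ w.support, v ∈ s

theorem kAlmostConvex_of_isWeaklyConvex_ball {o : V}
    (hball : ∀ r : ℕ, IsWeaklyConvex Γ {v | Γ.dist o v ≤ r}) (k : ℕ) : KAlmostConvex Γ o k := by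
  refine ⟨k, fun r x y hx hy hxy => ?_⟩
  obtain ⟨w, hw, hsupp⟩ := hball r x hx.le y hy.le
  exact ⟨w, hw.trans_le hxy, hsupp⟩

theorem isWeaklyConvex_of_exists_adj {s : Set V}
    (hstep : ∀ x ∈ s, ∀ y ∈ s, x ≠ y →
      (∃ x' ∈ s, Γ.Adj x x' ∧ Γ.dist x' y + 1 = Γ.dist x y) ∨
        ∃ y' ∈ s, Γ.Adj y' y ∧ Γ.dist x y' + 1 = Γ.dist x y) :
    IsWeaklyConvex Γ s := by
  intro x hx y hy
  induction hd : Γ.dist x y generalizing x y with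
  | zero =>
    obtain rfl : x = y := by
      by_contra hxy
      rcases hstep x hx y hy hxy with ⟨_, _, _, h⟩ | ⟨_, _, _, h⟩ <;> omega
    exact ⟨.nil, rfl, by simpa using hx⟩
  | succ d ih =>
    have hxy : x ≠ y := by
      rintro rfl
      simp at hd
    rcases hstep x hx y hy hxy with ⟨x', hx', hadj, h⟩ | ⟨y', hy', hadj, h⟩
    · obtain ⟨w, hw, hsupp⟩ := ih x' hx' y hy (by omega)
      exact ⟨.cons hadj w, by simp [hw], by simpa using ⟨hx, hsupp⟩⟩
    · obtain ⟨w, hw, hsupp⟩ := ih x hx y' hy' (by omega)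
      refine ⟨w.concat hadj, by simp [hw], fun v hv => ?_⟩
      rw [SimpleGraph.Walk.support_concat, List.mem_append, List.mem_singleton] at hv
      exact hv.elim (hsupp v) fun hvy => hvy ▸ hy

theorem le_add_walk_length {f : V → ℕ} (hf : ∀ u v, Γ.Adj u v → f v ≤ f u + 1) {u v : V}
    (w : Γ.Walk u v) : f v ≤ f u + w.length := by
  induction w with
  | nil => simp
  | cons hadj w ih =>
    have hstep := hf _ _ hadj
    rw [SimpleGraph.Walk.length_cons]
    omega

theorem exists_walk_length_eq_of_exists_adj {f : V → ℕ} {o : V} (ho : f o = 0)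
    (hdesc : ∀ v, v ≠ o → ∃ u, Γ.Adj v u ∧ f u + 1 = f v) (v : V) :
    ∃ w : Γ.Walk o v, w.length = f v := by
  induction hm : f v generalizing v with
  | zero =>
    obtain rfl : v = o := by
      by_contra hv
      obtain ⟨u, _, hu⟩ := hdesc v hv
      omega
    exact ⟨.nil, rfl⟩
  | succ m ih =>
    obtain ⟨u, hadj, hu⟩ := hdesc v (by rintro rfl; omega)
    obtain ⟨w, hw⟩ := ih u (by omega)
    exact ⟨w.concat hadj.symm, by simp [hw]⟩

theorem dist_eq_of_exists_adj {f : V → ℕ} {o : V} (ho : f o = 0)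
    (hlip : ∀ u v, Γ.Adj u v → f v ≤ f u + 1)
    (hdesc : ∀ v, v ≠ o → ∃ u, Γ.Adj v u ∧ f u + 1 = f v) (v : V) : Γ.dist o v = f v := by
  obtain ⟨w, hw⟩ := exists_walk_length_eq_of_exists_adj ho hdesc v
  obtain ⟨p, hp⟩ := w.reachable.exists_walk_length_eq_dist
  refine le_antisymm (hw ▸ SimpleGraph.dist_le w) ?_
  calc f v ≤ f o + p.length := le_add_walk_length hlip p
    _ = Γ.dist o v := by rw [ho, zero_add, hp]

end Graph

section L1

variable {ι : Type*} [Fintype ι]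

/-- The `ℓ¹` distance on `ℤ^ι`, valued in `ℕ` so that it can be compared with graph distances. -/
def l1Dist (x y : ι → ℤ) : ℕ := ∑ i, (x i - y i).natAbs

theorem l1Dist_self (x : ι → ℤ) : l1Dist x x = 0 := by simp [l1Dist]

theorem l1Dist_add_single [DecidableEq ι] (z x : ι → ℤ) (i : ι) (a : ℤ) :
    l1Dist z (x + Pi.single i a) + (z i - x i).natAbs =
      l1Dist z x + (z i - (x i + a)).natAbs := by
  have hoff : ∀ j ∈ ({i}ᶜ : Finset ι),
      (z j - (x + Pi.single i a : ι → ℤ) j).natAbs = (z j - x j).natAbs := by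
    intro j hj
    have hji : j ≠ i := by simpa using hj
    simp [hji]
  rw [l1Dist, l1Dist, Fintype.sum_eq_add_sum_compl i, Fintype.sum_eq_add_sum_compl i,
    Finset.sum_congr rfl hoff, Pi.add_apply, Pi.single_eq_same]
  omega

end L1

/-- The Cayley graph of `ℤ^ι` with respect to the standard basis vectors and their negatives. -/
abbrev integerGridGraph (ι : Type*) [DecidableEq ι] : SimpleGraph (ι → ℤ) :=
  cayleyGraphAdd (ι → ℤ) {v : ι → ℤ | ∃ i : ι, v = Pi.single i 1 ∨ v = -(Pi.single i 1)}

namespace integerGridGraph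

variable {ι : Type*} [DecidableEq ι]

theorem adj_iff {x y : ι → ℤ} :
    (integerGridGraph ι).Adj x y ↔ ∃ (i : ι) (a : ℤ), a.natAbs = 1 ∧ y = x + Pi.single i a := by
  simp only [cayleyGraphAdd, SimpleGraph.fromRel_adj, Set.mem_ofPred_eq, Int.natAbs_eq_iff,
    Nat.cast_one]
  constructor
  · rintro ⟨-, ⟨i, h | h⟩ | ⟨i, h | h⟩⟩
    · exact ⟨i, 1, .inl rfl, by rw [← h]; abel⟩
    · exact ⟨i, -1, .inr rfl, by rw [Pi.single_neg, ← h]; abel⟩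
    · exact ⟨i, -1, .inr rfl, by rw [Pi.single_neg, ← h]; abel⟩
    · exact ⟨i, 1, .inl rfl, by rw [← neg_eq_iff_eq_neg.mpr h]; abel⟩
  · rintro ⟨i, a, ha, rfl⟩
    have ha0 : a ≠ 0 := by omega
    refine ⟨by simpa using ha0, .inl ⟨i, ?_⟩⟩
    rw [neg_add_cancel_left, ← Pi.single_neg]
    exact ha.imp (congrArg _) (congrArg _)

theorem l1Dist_le_add_one_of_adj [Fintype ι] (z : ι → ℤ) {x y : ι → ℤ}
    (hxy : (integerGridGraph ι).Adj x y) : l1Dist z y ≤ l1Dist z x + 1 := by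
  obtain ⟨i, a, ha, rfl⟩ := adj_iff.mp hxy
  have hcoord := l1Dist_add_single z x i a
  omega

theorem exists_adj_l1Dist_add_one_eq [Fintype ι] (c : ι → ℤ) {x y : ι → ℤ} {i : ι} (hne : x i ≠ y i)
    (hle : (c i - y i).natAbs ≤ (c i - x i).natAbs) :
    ∃ x', (integerGridGraph ι).Adj x x' ∧ l1Dist c x' ≤ l1Dist c x ∧
      l1Dist y x' + 1 = l1Dist y x := by
  obtain ⟨a, ha, hac, hay⟩ : ∃ a : ℤ, a.natAbs = 1 ∧
      (c i - (x i + a)).natAbs ≤ (c i - x i).natAbs ∧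
      (y i - (x i + a)).natAbs + 1 = (y i - x i).natAbs := by
    rcases lt_or_gt_of_ne hne with hlt | hgt
    · exact ⟨1, by omega⟩
    · exact ⟨-1, by omega⟩
  have hc := l1Dist_add_single c x i a
  have hy := l1Dist_add_single y x i a
  exact ⟨x + Pi.single i a, adj_iff.mpr ⟨i, a, ha, rfl⟩, by omega, by omega⟩

theorem dist_eq_l1Dist [Fintype ι] (x y : ι → ℤ) : (integerGridGraph ι).dist x y = l1Dist x y := by
  refine dist_eq_of_exists_adj (l1Dist_self x) (fun _ _ => l1Dist_le_add_one_of_adj x) ?_ y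
  intro v hv
  obtain ⟨i, hi⟩ := Function.ne_iff.mp hv
  obtain ⟨u, hadj, -, hu⟩ := exists_adj_l1Dist_add_one_eq x hi (by simp)
  exact ⟨u, hadj, hu⟩

theorem exists_adj_dist_add_one_eq [Finite ι] (c : ι → ℤ) {x y : ι → ℤ} {i : ι} (hne : x i ≠ y i)
    (hle : (c i - y i).natAbs ≤ (c i - x i).natAbs) :
    ∃ x', (integerGridGraph ι).Adj x x' ∧
      (integerGridGraph ι).dist c x' ≤ (integerGridGraph ι).dist c x ∧
      (integerGridGraph ι).dist y x' + 1 = (integerGridGraph ι).dist y x := by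
  have := Fintype.ofFinite ι
  simpa only [dist_eq_l1Dist] using exists_adj_l1Dist_add_one_eq c hne hle

end integerGridGraph

theorem zn_almostConvex_general {ι : Type*} [Finite ι] [DecidableEq ι] (c : ι → ℤ) (r : ℕ) :
    IsWeaklyConvex (integerGridGraph ι) {v | (integerGridGraph ι).dist c v ≤ r} := by
  refine isWeaklyConvex_of_exists_adj fun x hx y hy hxy => ?_
  obtain ⟨i, hi⟩ := Function.ne_iff.mp hxy
  rcases le_total (c i - y i).natAbs (c i - x i).natAbs with hle | hle
  · obtain ⟨x', hadj, hc, hd⟩ := integerGridGraph.exists_adj_dist_add_one_eq c hi hle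
    rw [SimpleGraph.dist_comm, SimpleGraph.dist_comm (u := y)] at hd
    exact .inl ⟨x', hc.trans hx, hadj, hd⟩
  · obtain ⟨y', hadj, hc, hd⟩ := integerGridGraph.exists_adj_dist_add_one_eq c hi.symm hle
    exact .inr ⟨y', hc.trans hy, hadj.symm, hd⟩

/-- The free abelian group `ℤⁿ` (`n ≥ 1`) with its standard symmetric generating set
`{±e₁, …, ±eₙ}` has a Cayley graph that is `k`-almost convex for every `k`. -/
theorem zn_almostConvex (n : ℕ) (hn : 1 ≤ n) (k : ℕ) :
    KAlmostConvex
      (cayleyGraphAdd (Fin n → ℤ)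
        {v : Fin n → ℤ | ∃ i : Fin n, v = Pi.single i 1 ∨ v = -(Pi.single i 1)})
      0 k :=
  kAlmostConvex_of_isWeaklyConvex_ball (zn_almostConvex_general 0) k
end

section
/- Let G be a group with a finite symmetric generating set S that admits a Lipschitz combing with respect to the word metric of S. Then G is finitely presented: there is a finite set X and a surjective group homomorphism from the free group on X onto G whose kernel is the normal closure of a finite subset. -/
/-!
Let `T` be the unit ball around `1`, and suppose that combing paths to points at distance at most
one stay at distance at most `K`. Present `G` on the finite ball `T ^ (K + 1)` by its partial
multiplication table. To see that this presents `G`, it suffices to extend any map `e` on the ball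
respecting that table to a homomorphism on `G`. Lift each combing path step by step along `e`; the
strip between the paths to `g` and `g * b`, `b ∈ T`, is made of squares whose sides and diagonals
lie in `T ^ (K + 1)`, so each square commutes after applying `e`. Hence the endpoints `τ g` of
the lifts satisfy `τ (g * b) = τ g * e b`, which forces `g ↦ (τ 1)⁻¹ * τ g` to be the desired
homomorphism.
-/

section PartialMultiplication

variable {G Q : Type*} [Group G] [Group Q]

/-- `e` respects those products of two elements of `U` that again lie in `U`; outside `U` its
values are irrelevant. -/
def IsMulHomOn (U : Set G) (e : G → Q) : Prop :=
  ∀ ⦃a b : G⦄, a ∈ U → b ∈ U → a * b ∈ U → e (a * b) = e a * e b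

theorem IsMulHomOn.map_one {U : Set G} {e : G → Q} (he : IsMulHomOn U e) (h1 : (1 : G) ∈ U) :
    e 1 = 1 := by
  have h := he h1 h1 (by rwa [mul_one])
  rwa [mul_one, left_eq_mul] at h

open scoped Pointwise in
theorem IsMulHomOn.eqOn_pow {T : Set G} {n : ℕ} {e : G → Q} (he : IsMulHomOn (T ^ n) e)
    (h1 : (1 : G) ∈ T) {ψ : G →* Q} (hψ : Set.EqOn ψ e T) : Set.EqOn ψ e (T ^ n) := by
  suffices h : ∀ m ≤ n, Set.EqOn ψ e (T ^ m) from h n le_rfl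
  intro m
  induction m with
  | zero =>
    rintro _ - rfl
    rw [_root_.map_one, he.map_one (Set.one_mem_pow h1)]
  | succ m ih =>
    intro hm x hx
    have hxn := Set.pow_subset_pow_right h1 hm hx
    rw [pow_succ] at hx
    obtain ⟨a, ha, b, hb, rfl⟩ := hx
    have han := Set.pow_subset_pow_right h1 (Nat.le_of_succ_le hm) ha
    have hbn := Set.subset_pow h1 (Nat.ne_zero_of_lt hm) hb
    rw [map_mul, ih (Nat.le_of_succ_le hm) ha, hψ hb, he han hbn hxn]

theorem exists_monoidHom_eqOn_of_mul_right {T : Set G} (hT : Subgroup.closure T = ⊤) {e τ : G → Q}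
    (hτ : ∀ g, ∀ b ∈ T, τ (g * b) = τ g * e b) : ∃ ψ : G →* Q, Set.EqOn ψ e T := by
  have hmul : ∀ g h, τ (g * h) = τ g * ((τ 1)⁻¹ * τ h) := by
    intro g h
    have hh : h ∈ Subgroup.closure T := hT ▸ Subgroup.mem_top h
    induction hh using Subgroup.closure_induction_right with
    | one => simp only [mul_one, inv_mul_cancel]
    | mul_right h _ b hb ih => rw [← mul_assoc, hτ _ b hb, ih, hτ h b hb]; group
    | mul_inv_cancel h _ b hb ih =>
      have hτ_inv : ∀ g, τ (g * b⁻¹) = τ g * (e b)⁻¹ := fun g => by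
        rw [eq_mul_inv_iff_mul_eq, ← hτ _ b hb, inv_mul_cancel_right]
      rw [← mul_assoc, hτ_inv, ih, hτ_inv]; group
  refine ⟨MonoidHom.mk' (fun g => (τ 1)⁻¹ * τ g) fun g h => ?_, fun b hb => ?_⟩
  · rw [hmul, mul_assoc]
  · have h := hτ 1 b hb
    rw [one_mul] at h
    exact inv_mul_eq_of_eq_mul h

end PartialMultiplication

section MultiplicationTable

variable {G ι : Type*} [Group G]

/-- The relators `xᵢ xⱼ xₖ⁻¹` recording all the products `v i * v j = v k` within the family `v`. -/
def multiplicationTable (v : ι → G) : Set (FreeGroup ι) :=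
  (fun p : ι × ι × ι => FreeGroup.of p.1 * FreeGroup.of p.2.1 * (FreeGroup.of p.2.2)⁻¹) ''
    {p | v p.1 * v p.2.1 = v p.2.2}

theorem finite_multiplicationTable [Finite ι] (v : ι → G) : (multiplicationTable v).Finite :=
  (Set.toFinite _).image _

theorem multiplicationTable_relation {v : ι → G} {i j k : ι} (h : v i * v j = v k) :
    (PresentedGroup.of i * PresentedGroup.of j : PresentedGroup (multiplicationTable v)) =
      PresentedGroup.of k :=
  PresentedGroup.mk_eq_mk_of_mul_inv_mem ⟨(i, j, k), h, rfl⟩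

theorem isMulHomOn_extend_presentedGroup_of {v : ι → G} (hv : Function.Injective v) :
    IsMulHomOn (Set.range v)
      (Function.extend v (PresentedGroup.of (rels := multiplicationTable v)) 1) := by
  rintro _ _ ⟨i, rfl⟩ ⟨j, rfl⟩ ⟨k, hk⟩
  rw [← hk, hv.extend_apply, hv.extend_apply, hv.extend_apply, multiplicationTable_relation hk.symm]

theorem ker_lift_eq_normalClosure_multiplicationTable {v : ι → G} (hv : Function.Injective v)
    (hext : ∀ e : G → PresentedGroup (multiplicationTable v), IsMulHomOn (Set.range v) e →
      ∃ ψ : G →* PresentedGroup (multiplicationTable v), Set.EqOn ψ e (Set.range v)) :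
    (FreeGroup.lift v).ker = Subgroup.normalClosure (multiplicationTable v) := by
  apply le_antisymm
  · obtain ⟨ψ, hψ⟩ := hext _ (isMulHomOn_extend_presentedGroup_of hv)
    have hψ_lift : ψ.comp (FreeGroup.lift v) = PresentedGroup.mk (multiplicationTable v) := by
      refine FreeGroup.ext_hom _ _ fun i => ?_
      rw [MonoidHom.comp_apply, FreeGroup.lift_apply_of, hψ ⟨i, rfl⟩, hv.extend_apply]
      rfl
    intro w hw
    rw [← PresentedGroup.mk_eq_one_iff, ← hψ_lift, MonoidHom.comp_apply,
      MonoidHom.mem_ker.1 hw, map_one]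
  · apply PresentedGroup.closure_rels_subset_ker
    rintro _ ⟨⟨i, j, k⟩, hijk, rfl⟩
    simpa only [map_mul, map_inv, FreeGroup.lift_apply_of, mul_inv_eq_one, Set.mem_ofPred_eq]
      using hijk

theorem isFinitelyPresented_of_exists_monoidHom_eqOn {U : Set G} (hU : U.Finite)
    (hgen : Subgroup.closure U = ⊤)
    (hext : ∀ (Q : Type) [Group Q] (e : G → Q), IsMulHomOn U e →
      ∃ ψ : G →* Q, Set.EqOn ψ e U) :
    IsFinitelyPresented G := by
  obtain ⟨n, v, hv, rfl⟩ := hU.fin_param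
  refine ⟨Fin n, inferInstance, FreeGroup.lift v, ?_, multiplicationTable v,
    finite_multiplicationTable v, ker_lift_eq_normalClosure_multiplicationTable hv (hext _)⟩
  rw [← MonoidHom.range_eq_top, FreeGroup.range_lift_eq_closure, hgen]

end MultiplicationTable

section PathLift

variable {G Q : Type*} [Group G] [Group Q]

/-- The path in `Q` starting at `1` whose increments are the images under `e` of the increments
of the path `p`. -/
def pathLift (e : G → Q) (p : ℕ → G) : ℕ → Q
  | 0 => 1
  | t + 1 => pathLift e p t * e ((p t)⁻¹ * p (t + 1))

theorem pathLift_eq_mul_of_isMulHomOn {U : Set G} {e : G → Q} (he : IsMulHomOn U e) {p q : ℕ → G}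
    (h0 : p 0 = q 0) (hp : ∀ t, (p t)⁻¹ * p (t + 1) ∈ U) (hq : ∀ t, (q t)⁻¹ * q (t + 1) ∈ U)
    (hside : ∀ t, (p t)⁻¹ * q t ∈ U) (hdiag : ∀ t, (p t)⁻¹ * q (t + 1) ∈ U) (t : ℕ) :
    pathLift e q t = pathLift e p t * e ((p t)⁻¹ * q t) := by
  induction t with
  | zero =>
    have h1 : (1 : G) ∈ U := by simpa only [h0, inv_mul_cancel] using hside 0
    simp only [pathLift, h0, inv_mul_cancel, he.map_one h1, mul_one]
  | succ t ih =>
    -- The diagonal cuts the square on `p t`, `q t`, `p (t + 1)`, `q (t + 1)` into two triangles.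
    have triangle_q : e ((p t)⁻¹ * q t) * e ((q t)⁻¹ * q (t + 1)) = e ((p t)⁻¹ * q (t + 1)) := by
      rw [← he (hside t) (hq t) (by simpa only [mul_assoc, mul_inv_cancel_left] using hdiag t),
        mul_assoc, mul_inv_cancel_left]
    have triangle_p : e ((p t)⁻¹ * p (t + 1)) * e ((p (t + 1))⁻¹ * q (t + 1)) =
        e ((p t)⁻¹ * q (t + 1)) := by
      rw [← he (hp t) (hside (t + 1))
        (by simpa only [mul_assoc, mul_inv_cancel_left] using hdiag t),
        mul_assoc, mul_inv_cancel_left]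
    rw [pathLift, pathLift, ih, mul_assoc, mul_assoc, triangle_q, triangle_p]

theorem eventuallyConst_pathLift {e : G → Q} (he : e 1 = 1) {p : ℕ → G}
    (hp : Filter.EventuallyConst p Filter.atTop) :
    Filter.EventuallyConst (pathLift e p) Filter.atTop := by
  rw [Filter.eventuallyConst_atTop_nat] at hp ⊢
  obtain ⟨N, hN⟩ := hp
  refine ⟨N, fun t ht => ?_⟩
  rw [pathLift, hN t ht, inv_mul_cancel, he, mul_one]

end PathLift

section Combing

open scoped Pointwise

variable {G : Type*} [Group G] {T : Set G} {K : ℕ} {s : G → ℕ → G}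

/-- A combing with respect to the unit ball `T`, whose paths to two points differing by an element
of `T` stay within distance `K` of each other. Distances are encoded by membership of
`x⁻¹ * y` in powers of `T`. -/
structure IsFellowTravellerCombing (T : Set G) (K : ℕ) (s : G → ℕ → G) : Prop where
  start : ∀ g, s g 0 = 1
  step_mem : ∀ g t, (s g t)⁻¹ * s g (t + 1) ∈ T
  eventually_eq : ∀ g, ∀ᶠ t in Filter.atTop, s g t = g
  fellow_travel : ∀ g, ∀ b ∈ T, ∀ t, (s g t)⁻¹ * s (g * b) t ∈ T ^ K

namespace IsFellowTravellerCombing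

theorem one_mem (hs : IsFellowTravellerCombing T K s) : (1 : G) ∈ T := by
  obtain ⟨N, hN⟩ := Filter.eventually_atTop.1 (hs.eventually_eq 1)
  simpa only [hN N le_rfl, hN (N + 1) N.le_succ, mul_one, inv_one] using hs.step_mem 1 N

theorem closure_eq_top (hs : IsFellowTravellerCombing T K s) : Subgroup.closure T = ⊤ := by
  refine (Subgroup.eq_top_iff' _).2 fun g => ?_
  have path_mem : ∀ t, s g t ∈ Subgroup.closure T := by
    intro t
    induction t with
    | zero => exact hs.start g ▸ Subgroup.one_mem _
    | succ t ih =>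
      rw [← mul_inv_cancel_left (s g t) (s g (t + 1))]
      exact Subgroup.mul_mem _ ih (Subgroup.subset_closure (hs.step_mem g t))
  obtain ⟨t, ht⟩ := (hs.eventually_eq g).exists
  exact ht ▸ path_mem t

theorem pathLift_mul {Q : Type*} [Group Q] (hs : IsFellowTravellerCombing T K s) {e : G → Q}
    (he : IsMulHomOn (T ^ (K + 1)) e) (g : G) {b : G} (hb : b ∈ T) (t : ℕ) :
    pathLift e (s (g * b)) t = pathLift e (s g) t * e ((s g t)⁻¹ * s (g * b) t) := by
  have hT : T ⊆ T ^ (K + 1) := Set.subset_pow hs.one_mem K.succ_ne_zero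
  refine pathLift_eq_mul_of_isMulHomOn he ((hs.start g).trans (hs.start _).symm)
    (fun t => hT (hs.step_mem g t)) (fun t => hT (hs.step_mem _ t))
    (fun t => Set.pow_subset_pow_right hs.one_mem K.le_succ (hs.fellow_travel g b hb t))
    (fun t => ?_) t
  have h := Set.mul_mem_mul (hs.fellow_travel g b hb t) (hs.step_mem (g * b) t)
  rwa [← pow_succ, mul_assoc, mul_inv_cancel_left] at h

theorem exists_monoidHom_eqOn {Q : Type*} [Group Q] (hs : IsFellowTravellerCombing T K s)
    {e : G → Q} (he : IsMulHomOn (T ^ (K + 1)) e) : ∃ ψ : G →* Q, Set.EqOn ψ e (T ^ (K + 1)) := by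
  have he1 : e 1 = 1 := he.map_one (Set.one_mem_pow hs.one_mem)
  have hlift : ∀ g, ∃ x, ∀ᶠ t in Filter.atTop, pathLift e (s g) t = x := fun g =>
    (eventuallyConst_pathLift he1
      ((Filter.EventuallyConst.const g).congr
        (Filter.EventuallyEq.symm (hs.eventually_eq g)))).eventuallyEq_const
  choose τ hτ using hlift
  have hτ_mul : ∀ g, ∀ b ∈ T, τ (g * b) = τ g * e b := by
    intro g b hb
    obtain ⟨t, hg, hgb, hsg, hsgb⟩ := ((hτ g).and ((hτ (g * b)).and
      ((hs.eventually_eq g).and (hs.eventually_eq (g * b))))).exists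
    rw [← hg, ← hgb, hs.pathLift_mul he g hb, hsg, hsgb, inv_mul_cancel_left]
  obtain ⟨ψ, hψ⟩ := exists_monoidHom_eqOn_of_mul_right hs.closure_eq_top hτ_mul
  exact ⟨ψ, he.eqOn_pow hs.one_mem hψ⟩

theorem isFinitelyPresented (hs : IsFellowTravellerCombing T K s) (hT : T.Finite) :
    IsFinitelyPresented G := by
  have hfinite : ∀ n : ℕ, (T ^ n).Finite := by
    intro n
    induction n with
    | zero => exact pow_zero T ▸ Set.finite_one
    | succ n ih => exact pow_succ T n ▸ ih.mul hT
  have hgen : Subgroup.closure (T ^ (K + 1)) = ⊤ :=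
    top_unique (hs.closure_eq_top.ge.trans
      (Subgroup.closure_mono (Set.subset_pow hs.one_mem K.succ_ne_zero)))
  exact isFinitelyPresented_of_exists_monoidHom_eqOn (hfinite (K + 1)) hgen
    fun _ _ _ he => hs.exists_monoidHom_eqOn he

end IsFellowTravellerCombing

end Combing

section CayleyGraph

open scoped Pointwise

variable {G : Type*} [Group G] {S : Set G}

/-- The ball of radius one around `1` in `cayleyGraph G S`. The inverses are included because
`cayleyGraph` ignores the orientation of edges even when `S` is not symmetric. -/
def cayleyUnitBall (S : Set G) : Set G :=
  insert 1 (S ∪ S⁻¹)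

theorem one_mem_cayleyUnitBall : (1 : G) ∈ cayleyUnitBall S :=
  Set.mem_insert _ _

theorem finite_cayleyUnitBall (hS : S.Finite) : (cayleyUnitBall S).Finite :=
  (hS.union hS.inv).insert 1

theorem inv_mul_mem_cayleyUnitBall_iff {x y : G} :
    x⁻¹ * y ∈ cayleyUnitBall S ↔ x = y ∨ (cayleyGraph G S).Adj x y := by
  simp only [cayleyUnitBall, cayleyGraph, Set.mem_insert_iff, Set.mem_union, Set.mem_inv,
    SimpleGraph.fromRel_adj, inv_mul_eq_one, mul_inv_rev, inv_inv]
  tauto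

theorem inv_mul_mem_cayleyUnitBall_pow_of_walk {x y : G} (w : (cayleyGraph G S).Walk x y) :
    x⁻¹ * y ∈ cayleyUnitBall S ^ w.length := by
  induction w with
  | nil => simp only [inv_mul_cancel, SimpleGraph.Walk.length_nil, pow_zero, Set.mem_one]
  | @cons x z y hadj w ih =>
    have hxz : x⁻¹ * z ∈ cayleyUnitBall S := inv_mul_mem_cayleyUnitBall_iff.2 (.inr hadj)
    have h := Set.mul_mem_mul hxz ih
    rwa [← pow_succ', mul_assoc, mul_inv_cancel_left] at h

theorem cayleyGraph_reachable_mul_right (g : G) {a : G} (ha : a ∈ S) :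
    (cayleyGraph G S).Reachable g (g * a) := by
  have hmem : g⁻¹ * (g * a) ∈ cayleyUnitBall S := by
    rw [inv_mul_cancel_left]
    exact .inr (.inl ha)
  rcases inv_mul_mem_cayleyUnitBall_iff.1 hmem with heq | hadj
  · exact heq ▸ SimpleGraph.Reachable.refl _
  · exact hadj.reachable

theorem cayleyGraph_preconnected (hS : Subgroup.closure S = ⊤) :
    (cayleyGraph G S).Preconnected := by
  have h : ∀ g, (cayleyGraph G S).Reachable 1 g := by
    intro g
    have hg : g ∈ Subgroup.closure S := hS ▸ Subgroup.mem_top g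
    induction hg using Subgroup.closure_induction_right with
    | one => exact SimpleGraph.Reachable.refl _
    | mul_right g _ a ha ih => exact ih.trans (cayleyGraph_reachable_mul_right g ha)
    | mul_inv_cancel g _ a ha ih =>
      have hback := cayleyGraph_reachable_mul_right (g * a⁻¹) ha
      rw [inv_mul_cancel_right] at hback
      exact ih.trans hback.symm
  exact fun x y => (h x).symm.trans (h y)

theorem inv_mul_mem_cayleyUnitBall_pow_of_dist_le (hS : Subgroup.closure S = ⊤) {x y : G} {n : ℕ}
    (h : (cayleyGraph G S).dist x y ≤ n) : x⁻¹ * y ∈ cayleyUnitBall S ^ n := by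
  obtain ⟨w, hw⟩ := (cayleyGraph_preconnected hS x y).exists_walk_length_eq_dist
  exact Set.pow_subset_pow_right one_mem_cayleyUnitBall (hw.trans_le h)
    (inv_mul_mem_cayleyUnitBall_pow_of_walk w)

theorem isFellowTravellerCombing_cayleyUnitBall (hS : Subgroup.closure S = ⊤) {s : G → ℕ → G}
    (hs_start : ∀ g, s g 0 = 1)
    (hs_step : ∀ g t, (cayleyGraph G S).dist (s g t) (s g (t + 1)) ≤ 1)
    (hs_end : ∀ g, ∃ T, ∀ t ≥ T, s g t = g) {K : ℕ}
    (hs_fellow : ∀ g h t, (cayleyGraph G S).Adj g h → (cayleyGraph G S).dist (s g t) (s h t) ≤ K) :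
    IsFellowTravellerCombing (cayleyUnitBall S) K s where
  start := hs_start
  step_mem g t := pow_one (cayleyUnitBall S) ▸
    inv_mul_mem_cayleyUnitBall_pow_of_dist_le hS (hs_step g t)
  eventually_eq g := Filter.eventually_atTop.2 (hs_end g)
  fellow_travel g b hb t := by
    apply inv_mul_mem_cayleyUnitBall_pow_of_dist_le hS
    rw [← inv_mul_cancel_left g b] at hb
    rcases inv_mul_mem_cayleyUnitBall_iff.1 hb with heq | hadj
    · rw [← heq, SimpleGraph.dist_self]
      exact K.zero_le
    · exact hs_fellow g (g * b) t hadj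

end CayleyGraph

theorem lipschitz_combing_finitelyPresented_general
    {G : Type*} [Group G] {S : Set G} (hS_fin : S.Finite) (hS_gen : Subgroup.closure S = ⊤)
    {s : G → ℕ → G}
    (hs_start : ∀ g, s g 0 = 1)
    (hs_step : ∀ g t, (cayleyGraph G S).dist (s g t) (s g (t + 1)) ≤ 1)
    (hs_end : ∀ g, ∃ T, ∀ t ≥ T, s g t = g)
    {K : ℕ}
    (hs_fellow : ∀ g h t, (cayleyGraph G S).Adj g h → (cayleyGraph G S).dist (s g t) (s h t) ≤ K) :
    IsFinitelyPresented G :=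
  (isFellowTravellerCombing_cayleyUnitBall hS_gen hs_start hs_step hs_end
    hs_fellow).isFinitelyPresented (finite_cayleyUnitBall hS_fin)

/-- A group admitting a Lipschitz combing (with respect to the word metric of a finite
symmetric generating set) is finitely presented. Here a combing assigns to each `g ∈ G`
a discrete path `s g : ℕ → G` from `1` to `g` moving by at most one step at a time, and
it is Lipschitz if `d(s g t, s h t) ≤ C₁ · d(g,h) + C₂` for all `g, h, t`. -/
theorem lipschitz_combing_finitelyPresented
    (G : Type) [Group G] (S : Set G)
    (hS_fin : S.Finite) (hS_symm : ∀ s ∈ S, s⁻¹ ∈ S) (hS_one : (1 : G) ∉ S)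
    (hS_gen : Subgroup.closure S = ⊤)
    (s : G → ℕ → G)
    (hs_start : ∀ g, s g 0 = 1)
    (hs_step : ∀ g t, (cayleyGraph G S).dist (s g t) (s g (t + 1)) ≤ 1)
    (hs_end : ∀ g, ∃ T, ∀ t ≥ T, s g t = g)
    (C₁ C₂ : ℕ)
    (hs_lip : ∀ g h t, (cayleyGraph G S).dist (s g t) (s h t) ≤
      C₁ * (cayleyGraph G S).dist g h + C₂) :
    IsFinitelyPresented G :=
  lipschitz_combing_finitelyPresented_general hS_fin hS_gen hs_start hs_step hs_end
    fun g h t hadj => SimpleGraph.dist_eq_one_iff_adj.2 hadj ▸ hs_lip g h t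
end
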